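/- Let μ, λ ∈ ℝ with μ ≠ 0, |λ| ≤ |μ| and |λ| ≤ 2. Then ∫₀¹ ln|μ + λ cos(2πθ)| dθ = 0 if and only if |μ| = 1 + λ²/4. -/

import Mathlib

/-!
For `|λ| ≤ |μ|` the trigonometric polynomial `μ + λ cos φ` is a perfect square on the unit circle:
`|μ + λ cos φ| = |b| ‖z + r‖²` for `z = e^{iφ}`, where `μ = b (1 + r²)`, `λ = 2 b r` and `|r| ≤ 1`.
Its logarithmic average is therefore the logarithmic Mahler measure of `b (X + r)²`, which by
Jensen's formula is `log |b|` because the root `-r` lies in the closed unit disc. Solving for `b`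
gives `|b| = (|μ| + √(μ² - λ²)) / 2`, and it remains to see when this equals `1`.
-/

open Polynomial Real

lemma circleAverage_eq_integral_zero_one {E : Type*} [NormedAddCommGroup E] [NormedSpace ℝ E]
    (f : ℂ → E) (c : ℂ) (R : ℝ) :
    circleAverage f c R = ∫ θ in (0 : ℝ)..1, f (circleMap c R (2 * π * θ)) := by
  rw [intervalIntegral.integral_comp_mul_left (fun φ ↦ f (circleMap c R φ)) two_pi_pos.ne',
    mul_zero, mul_one, circleAverage_def]

lemma norm_circleMap_zero_add_ofReal_sq (R r φ : ℝ) :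
    ‖circleMap 0 R φ + r‖ ^ 2 = R ^ 2 + 2 * R * r * cos φ + r ^ 2 := by
  have hre : (circleMap 0 R φ + r).re = R * cos φ + r := by
    simp [circleMap_zero, Complex.exp_ofReal_mul_I_re]
  have him : (circleMap 0 R φ + r).im = R * sin φ := by
    simp [circleMap_zero, Complex.exp_ofReal_mul_I_im]
  rw [Complex.sq_norm, Complex.normSq_apply, hre, him]
  linear_combination R ^ 2 * sin_sq_add_cos_sq φ

lemma logMahlerMeasure_C_mul_X_add_C_sq {b : ℂ} (hb : b ≠ 0) (r : ℂ) :
    (C b * (X + C r) ^ 2).logMahlerMeasure = log ‖b‖ + 2 * log⁺ ‖r‖ := by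
  have hX : X + C r ≠ 0 := X_add_C_ne_zero r
  rw [logMahlerMeasure_C_mul hb (pow_ne_zero 2 hX), sq,
    logMahlerMeasure_mul_eq_add_logMahlerMeasure (mul_ne_zero hX hX), logMahlerMeasure_X_add_C,
    two_mul]

lemma integral_log_abs_mul_one_add_two_mul_cos_add_sq {b : ℝ} (hb : b ≠ 0) (r : ℝ) :
    ∫ θ in (0 : ℝ)..1, log |b * (1 + 2 * r * cos (2 * π * θ) + r ^ 2)| =
      log |b| + 2 * log⁺ |r| := by
  have heval (φ : ℝ) : ‖(C (b : ℂ) * (X + C (r : ℂ)) ^ 2).eval (circleMap 0 1 φ)‖ =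
      |b * (1 + 2 * r * cos φ + r ^ 2)| := by
    have hsq : ‖circleMap 0 1 φ + r‖ ^ 2 = 1 + 2 * r * cos φ + r ^ 2 := by
      rw [norm_circleMap_zero_add_ofReal_sq, one_pow, mul_one]
    simp [← hsq]
  have hJensen := logMahlerMeasure_C_mul_X_add_C_sq (Complex.ofReal_ne_zero.mpr hb) r
  simpa only [logMahlerMeasure_def, circleAverage_eq_integral_zero_one, heval, Complex.norm_real,
    norm_eq_abs] using hJensen

lemma exists_eq_mul_one_add_sq_and_eq_two_mul {μ lam : ℝ} (hμ : μ ≠ 0) (h : |lam| ≤ |μ|) :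
    ∃ b r : ℝ, |b| = (|μ| + √(μ ^ 2 - lam ^ 2)) / 2 ∧ |r| ≤ 1 ∧
      μ = b * (1 + r ^ 2) ∧ lam = 2 * b * r := by
  wlog hpos : 0 < μ generalizing μ lam
  · obtain ⟨b, r, hb, hr, hμb, hlam⟩ :=
      this (neg_ne_zero.mpr hμ) (by rwa [abs_neg, abs_neg] : |-lam| ≤ |-μ|)
        (neg_pos.mpr (lt_of_le_of_ne (not_lt.mp hpos) hμ))
    rw [abs_neg, neg_sq, neg_sq] at hb
    exact ⟨-b, r, by rwa [abs_neg], hr, by linarith, by linarith⟩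
  rw [abs_of_pos hpos] at h ⊢
  set s := √(μ ^ 2 - lam ^ 2)
  have hs : 0 ≤ s := sqrt_nonneg _
  have hs_sq : s ^ 2 = μ ^ 2 - lam ^ 2 :=
    sq_sqrt (sub_nonneg.mpr (sq_le_sq.mpr (by rwa [abs_of_pos hpos])))
  have hμs : 0 < μ + s := by positivity
  refine ⟨(μ + s) / 2, lam / (μ + s), abs_of_pos (by positivity), ?_, ?_, ?_⟩
  · rw [abs_div, abs_of_pos hμs, div_le_one hμs]
    linarith
  · field_simp
    linear_combination -hs_sq
  · field_simp

lemma integral_log_abs_add_mul_cos {μ lam : ℝ} (hμ : μ ≠ 0) (h : |lam| ≤ |μ|) :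
    ∫ θ in (0 : ℝ)..1, log |μ + lam * cos (2 * π * θ)| =
      log ((|μ| + √(μ ^ 2 - lam ^ 2)) / 2) := by
  obtain ⟨b, r, hb, hr, rfl, rfl⟩ := exists_eq_mul_one_add_sq_and_eq_two_mul hμ h
  have hroot : log⁺ |r| = 0 := by rwa [posLog_abs, posLog_eq_zero_iff]
  calc ∫ θ in (0 : ℝ)..1, log |b * (1 + r ^ 2) + 2 * b * r * cos (2 * π * θ)|
      = ∫ θ in (0 : ℝ)..1, log |b * (1 + 2 * r * cos (2 * π * θ) + r ^ 2)| := by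
        congr! 4
        ring
    _ = log |b| + 2 * log⁺ |r| :=
        integral_log_abs_mul_one_add_two_mul_cos_add_sq (left_ne_zero_of_mul hμ) r
    _ = _ := by rw [hroot, mul_zero, add_zero, hb]

lemma add_sqrt_sq_sub_sq_eq_two_iff {m l : ℝ} (hl : |l| ≤ 2) :
    m + √(m ^ 2 - l ^ 2) = 2 ↔ m = 1 + l ^ 2 / 4 := by
  have hl_sq : l ^ 2 ≤ 2 ^ 2 := sq_le_sq.mpr (by rwa [abs_two])
  constructor
  · intro hsum
    have hsqrt : √(m ^ 2 - l ^ 2) = 2 - m := by linarith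
    have hm : m ≤ 2 := by linarith [sqrt_nonneg (m ^ 2 - l ^ 2)]
    rcases hm.eq_or_lt with rfl | hm
    · have : 2 ^ 2 - l ^ 2 ≤ 0 := sqrt_eq_zero'.mp (by rw [hsqrt, sub_self])
      linarith
    · rw [sqrt_eq_iff_mul_self_eq_of_pos (sub_pos.mpr hm)] at hsqrt
      linarith
  · rintro rfl
    have hsq : (1 + l ^ 2 / 4) ^ 2 - l ^ 2 = (1 - l ^ 2 / 4) ^ 2 := by ring
    rw [hsq, sqrt_sq (by linarith)]
    ring

/-- In the reducibility region `|λ| ≤ |μ|` (with `μ ≠ 0`, `|λ| ≤ 2`),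
the Lyapunov exponent `∫₀¹ ln |μ + λ cos 2πθ| dθ` of the trivial invariant set of the
model map vanishes exactly on the parabolas `|μ| = 1 + λ²/4`. -/
theorem stmt5 (μ lam : ℝ) (hμ : μ ≠ 0) (h1 : |lam| ≤ |μ|) (h2 : |lam| ≤ 2) :
    (∫ θ in (0:ℝ)..1, Real.log |μ + lam * Real.cos (2 * Real.pi * θ)|) = 0 ↔
      |μ| = 1 + lam ^ 2 / 4 := by
  have hpos : 0 < (|μ| + √(μ ^ 2 - lam ^ 2)) / 2 := by positivity
  have hlog : log ((|μ| + √(μ ^ 2 - lam ^ 2)) / 2) = 0 ↔ (|μ| + √(μ ^ 2 - lam ^ 2)) / 2 = 1 := by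
    rw [← log_one, log_injOn_pos.eq_iff hpos (Set.mem_Ioi.mpr one_pos)]
  calc _ ↔ log ((|μ| + √(μ ^ 2 - lam ^ 2)) / 2) = 0 := by
        rw [integral_log_abs_add_mul_cos hμ h1]
    _ ↔ |μ| + √(|μ| ^ 2 - lam ^ 2) = 2 := by
        rw [hlog, div_eq_one_iff_eq two_ne_zero, sq_abs]
    _ ↔ |μ| = 1 + lam ^ 2 / 4 := add_sqrt_sq_sub_sq_eq_two_iff h2
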